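/- arXiv:2501.06996 — 6 statements merged into one kernel-verified Lean document; each statement's English description precedes it below -/
import Mathlib

section
/- Let E be a real normed vector space and let C ⊆ E be a convex, topologically open set. If W ⊆ C is nonempty and is a wall of C (for all a, b ∈ C and all r ∈ ℝ with 0 < r < 1: (1-r)•a + r•b ∈ W ⟺ a ∈ W and b ∈ W), then W = C. In other words, open convex sets are algebraically open: they have no proper nonempty walls. -/
/-!
A wall is in particular an extreme subset: it contains the endpoints of every open segment of `C`
that it meets. If `w ∈ W` is interior to `C`, then for every `x ∈ C` the segment from `x` to `w`
can be prolonged slightly beyond `w` inside `C`, so `w` lies on an open segment of `C` with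
endpoint `x`, whence `x ∈ W`.
-/

open Set Filter Topology AffineMap

theorem isExtreme_iff_forall_weighted_mean {𝕜 E : Type*} [Ring 𝕜] [PartialOrder 𝕜]
    [AddRightMono 𝕜] [AddCommGroup E] [Module 𝕜 E] {A B : Set E} :
    IsExtreme 𝕜 A B ↔ B ⊆ A ∧ ∀ a ∈ A, ∀ b ∈ A, ∀ r : 𝕜, 0 < r → r < 1 →
      (1 - r) • a + r • b ∈ B → a ∈ B ∧ b ∈ B := by
  constructor
  · refine fun hB ↦ ⟨hB.subset, fun a ha b hb r hr₀ hr₁ hmean ↦ ?_⟩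
    have hseg : (1 - r) • a + r • b ∈ openSegment 𝕜 a b :=
      ⟨1 - r, r, sub_pos.2 hr₁, hr₀, sub_add_cancel 1 r, rfl⟩
    exact ⟨hB.left_mem_of_mem_openSegment ha hb hmean hseg,
      hB.right_mem_of_mem_openSegment ha hb hmean hseg⟩
  · rintro ⟨hBA, hB⟩
    refine ⟨hBA, fun a ha b hb z hz hzseg ↦ ?_⟩
    rw [openSegment_eq_image] at hzseg
    obtain ⟨r, ⟨hr₀, hr₁⟩, rfl⟩ := hzseg
    exact (hB a ha b hb r hr₀ hr₁ hz).1

section OrderedField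

variable {𝕜 E : Type*} [Field 𝕜] [LinearOrder 𝕜] [IsStrictOrderedRing 𝕜] [AddCommGroup E]
  [Module 𝕜 E]

theorem mem_openSegment_homothety_of_one_lt (x w : E) {t : 𝕜} (ht : 1 < t) :
    w ∈ openSegment 𝕜 x (homothety x t w) := by
  have ht₀ : 0 < t := zero_lt_one.trans ht
  have hw : homothety x t⁻¹ (homothety x t w) = w := by
    rw [← homothety_mul_apply, inv_mul_cancel₀ ht₀.ne', homothety_one, id_apply]
  have hseg := lineMap_mem_openSegment 𝕜 x (homothety x t w)
    ⟨inv_pos.2 ht₀, inv_lt_one_of_one_lt₀ ht⟩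
  rwa [← homothety_eq_lineMap, hw] at hseg

variable [TopologicalSpace 𝕜] [OrderTopology 𝕜] [TopologicalSpace E] [IsTopologicalAddGroup E]
  [ContinuousSMul 𝕜 E]

variable (𝕜) in
theorem exists_mem_openSegment_of_mem_interior {s : Set E} (x : E) {w : E}
    (hw : w ∈ interior s) : ∃ y ∈ s, w ∈ openSegment 𝕜 x y := by
  have hnear : ∀ᶠ t in 𝓝[>] (1 : 𝕜), homothety x t w ∈ s :=
    (eventually_homothety_mem_of_mem_interior 𝕜 x hw).filter_mono nhdsWithin_le_nhds
  obtain ⟨t, hts, ht⟩ := (hnear.and self_mem_nhdsWithin).exists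
  exact ⟨homothety x t w, hts, mem_openSegment_homothety_of_one_lt x w ht⟩

theorem open_convex_has_no_proper_wall_general {C W : Set E} (hWC : IsExtreme 𝕜 C W)
    (hmeet : (W ∩ interior C).Nonempty) : W = C := by
  refine hWC.subset.antisymm fun x hx ↦ ?_
  obtain ⟨w, hwW, hwC⟩ := hmeet
  obtain ⟨y, hy, hwxy⟩ := exists_mem_openSegment_of_mem_interior 𝕜 x hwC
  exact hWC.left_mem_of_mem_openSegment hx hy hwW hwxy

end OrderedField

/-- A topologically open convex subset `C` of a real normed space is
algebraically open: its only nonempty wall is `C` itself. -/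
theorem open_convex_has_no_proper_wall
    (E : Type*) [NormedAddCommGroup E] [NormedSpace ℝ E]
    (C W : Set E) (hC : Convex ℝ C) (hCopen : IsOpen C)
    (hWC : W ⊆ C) (hW : W.Nonempty)
    (hwall : ∀ a ∈ C, ∀ b ∈ C, ∀ r : ℝ, 0 < r → r < 1 →
        ((1 - r) • a + r • b ∈ W ↔ a ∈ W ∧ b ∈ W)) :
    W = C :=
  open_convex_has_no_proper_wall_general (isExtreme_iff_forall_weighted_mean.2
      ⟨hWC, fun a ha b hb r hr₀ hr₁ ↦ (hwall a ha b hb r hr₀ hr₁).1⟩)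
    (by rwa [hCopen.interior_eq, inter_eq_left.2 hWC])
end

section
/- For p ∈ ℝ define the operation m_p on WithTop ℝ (the extended real line ℝ ∪ {∞}) by m_p(x, y) = (1-p)·x + p·y when x, y are real, and m_p(x, y) = ⊤ whenever x = ⊤ or y = ⊤. Then for all p, r ∈ ℝ with 0 < p < 1 and 0 < r < 1 and all x, y, z ∈ WithTop ℝ: (i) m_p(x, x) = x; (ii) m_p(x, y) = m_{1-p}(y, x); (iii) m_p(m_r(x, y), z) = m_{r∘p}(x, m_{p/(r∘p)}(y, z)), where r∘p = r + p - r·p. -/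
/-- The weighted mean operation on the extended real line `WithTop ℝ`:
`(1-p)·x + p·y` for real arguments, and `⊤` whenever an argument is `⊤`. -/
def extMean (p : ℝ) (x y : WithTop ℝ) : WithTop ℝ :=
  match x, y with
  | (a : ℝ), (b : ℝ) => ((1 - p) * a + p * b : ℝ)
  | _, _ => ⊤

section LineMap

open AffineMap

/-- Both sides are the barycentre of `a`, `b`, `c` with weights
`(1 - p) * (1 - r)`, `(1 - p) * r` and `p`. -/
theorem lineMap_lineMap_skew_assoc {k V P : Type*} [CommRing k] [AddCommGroup V] [Module k V]
    [AddTorsor V P] {p r s : k} (hs : (r + p - r * p) * s = p) (a b c : P) :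
    lineMap (lineMap a b r) c p = lineMap a (lineMap b c s) (r + p - r * p) := by
  obtain ⟨v, rfl⟩ : ∃ v : V, b = v +ᵥ a := ⟨b -ᵥ a, (vsub_vadd b a).symm⟩
  obtain ⟨w, rfl⟩ : ∃ w : V, c = w +ᵥ a := ⟨c -ᵥ a, (vsub_vadd c a).symm⟩
  simp only [lineMap_apply, vadd_vsub, vadd_vsub_vadd_cancel_right, vadd_vadd,
    vadd_right_cancel_iff]
  linear_combination (norm := module) hs • (v - w)

end LineMap

/-- The weighted mean `(1 - p) a + p b` of an affine space `P`, extended to `P ∪ {⊤}` with `⊤`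
absorbing. As a `WithTop.map₂` lift it inherits from `P` every identity whose two sides involve
the same variables. -/
noncomputable def absorbingMean {k V P : Type*} [Ring k] [AddCommGroup V] [Module k V]
    [AddTorsor V P] (p : k) : WithTop P → WithTop P → WithTop P :=
  WithTop.map₂ fun a b ↦ AffineMap.lineMap a b p

section AbsorbingMean

variable {k V P : Type*} [AddCommGroup V] [AddTorsor V P]

theorem absorbingMean_self [Ring k] [Module k V] (p : k) (x : WithTop P) :
    absorbingMean p x x = x := by
  cases x with
  | top => rfl
  | coe a => exact congrArg WithTop.some (AffineMap.lineMap_same_apply a p)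

theorem absorbingMean_skew_comm [Ring k] [Module k V] (p : k) (x y : WithTop P) :
    absorbingMean p x y = absorbingMean (1 - p) y x :=
  Option.map₂_comm fun a b ↦ (AffineMap.lineMap_apply_one_sub b a p).symm

theorem absorbingMean_skew_assoc [CommRing k] [Module k V] {p r s : k}
    (hs : (r + p - r * p) * s = p) (x y z : WithTop P) :
    absorbingMean p (absorbingMean r x y) z =
      absorbingMean (r + p - r * p) x (absorbingMean s y z) :=
  Option.map₂_assoc (lineMap_lineMap_skew_assoc hs)

end AbsorbingMean

theorem extMean_eq_absorbingMean (p : ℝ) : extMean p = absorbingMean p := by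
  funext x y
  cases x with
  | top => rfl
  | coe a =>
    cases y with
    | top => rfl
    | coe b => exact congrArg WithTop.some (AffineMap.lineMap_apply_ring a b p).symm

theorem extMean_barycentric_general {k V P : Type*} [Field k] [AddCommGroup V] [Module k V]
    [AddTorsor V P] {p r : k} (hq : r + p - r * p ≠ 0) (x y z : WithTop P) :
    absorbingMean p x x = x ∧
    absorbingMean p x y = absorbingMean (1 - p) y x ∧
    absorbingMean p (absorbingMean r x y) z
      = absorbingMean (r + p - r * p) x (absorbingMean (p / (r + p - r * p)) y z) :=
  ⟨absorbingMean_self p x, absorbingMean_skew_comm p x y,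
    absorbingMean_skew_assoc (mul_div_cancel₀ p hq) x y z⟩

/-- The extended real line with the absorbing weighted mean operations
satisfies idempotence, skew-commutativity and skew-associativity, the defining
identities of barycentric algebras. -/
theorem extMean_barycentric
    (p r : ℝ) (hp0 : 0 < p) (hp1 : p < 1) (hr0 : 0 < r) (hr1 : r < 1)
    (x y z : WithTop ℝ) :
    extMean p x x = x ∧
    extMean p x y = extMean (1 - p) y x ∧
    extMean p (extMean r x y) z
      = extMean (r + p - r * p) x (extMean (p / (r + p - r * p)) y z) := by
  have hq : 0 < r + p - r * p := by linarith [mul_pos hr0 (sub_pos.mpr hp1)]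
  simpa only [extMean_eq_absorbingMean] using extMean_barycentric_general hq.ne' x y z
end

section
/- Let K be a field, V a vector space over K, U₁ and U₂ submodules of V, x, y ∈ V, and k ∈ K with k ≠ 0 and k ≠ 1. Then {(1-k)•a + k•b : a ∈ x + U₁, b ∈ y + U₂} = ((1-k)•x + k•y) + (U₁ ⊔ U₂), where x + U denotes the coset {x + u : u ∈ U} and U₁ ⊔ U₂ is the submodule {u₁ + u₂ : u₁ ∈ U₁, u₂ ∈ U₂}. -/
open Pointwise

theorem smul_coe_set_of_isUnit {R M S : Type*} [Monoid R] [MulAction R M] [SetLike S M]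
    [SMulMemClass S R M] {r : R} (hr : IsUnit r) (s : S) : r • (s : Set M) = s := by
  obtain ⟨u, rfl⟩ := hr
  refine Set.Subset.antisymm (Set.smul_set_subset_iff.mpr fun _ => SMulMemClass.smul_mem _) ?_
  intro m hm
  exact ⟨(↑u⁻¹ : R) • m, SMulMemClass.smul_mem _ hm, smul_inv_smul u m⟩

theorem smul_set_vadd_set {R M : Type*} [AddZeroClass M] [DistribSMul R M] (r : R) (x : M)
    (t : Set M) : r • (x +ᵥ t) = r • x +ᵥ r • t :=
  Set.image_vadd_distrib (DistribSMul.toAddMonoidHom M r) x t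

section Module

variable {R M : Type*} [Semiring R] [AddCommMonoid M] [Module R M]

theorem smul_vadd_coe_submodule_of_isUnit {r : R} (hr : IsUnit r) (x : M) (U : Submodule R M) :
    r • (x +ᵥ (U : Set M)) = r • x +ᵥ (U : Set M) := by
  rw [smul_set_vadd_set, smul_coe_set_of_isUnit hr]

theorem vadd_coe_submodule_add_vadd_coe_submodule (x y : M) (U₁ U₂ : Submodule R M) :
    (x +ᵥ (U₁ : Set M)) + (y +ᵥ (U₂ : Set M)) = (x + y) +ᵥ ((U₁ ⊔ U₂ : Submodule R M) : Set M) := by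
  rw [vadd_add_vadd_comm, Submodule.coe_sup]

theorem weighted_mean_of_cosets_general {r s : R} (hr : IsUnit r) (hs : IsUnit s) (x y : M)
    (U₁ U₂ : Submodule R M) :
    Set.image2 (fun a b => r • a + s • b) (x +ᵥ (U₁ : Set M)) (y +ᵥ (U₂ : Set M))
      = (r • x + s • y) +ᵥ ((U₁ ⊔ U₂ : Submodule R M) : Set M) :=
  calc
    Set.image2 (fun a b => r • a + s • b) (x +ᵥ (U₁ : Set M)) (y +ᵥ (U₂ : Set M))
    _ = r • (x +ᵥ (U₁ : Set M)) + s • (y +ᵥ (U₂ : Set M)) := by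
      simp only [← Set.image2_add, ← Set.image_smul, Set.image2_image_left, Set.image2_image_right]
    _ = (r • x +ᵥ (U₁ : Set M)) + (s • y +ᵥ (U₂ : Set M)) := by
      rw [smul_vadd_coe_submodule_of_isUnit hr, smul_vadd_coe_submodule_of_isUnit hs]
    _ = (r • x + s • y) +ᵥ ((U₁ ⊔ U₂ : Submodule R M) : Set M) :=
      vadd_coe_submodule_add_vadd_coe_submodule _ _ U₁ U₂

end Module

/-- Applying the weighted mean operation `k̲(a,b) = (1-k)•a + k•b`, for
`k ≠ 0, 1`, elementwise to two cosets `x + U₁` and `y + U₂` of submodules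
yields the coset `((1-k)•x + k•y) + (U₁ ⊔ U₂)`. -/
theorem weighted_mean_of_cosets
    (K : Type*) [Field K] (V : Type*) [AddCommGroup V] [Module K V]
    (U₁ U₂ : Submodule K V) (x y : V) (k : K) (hk0 : k ≠ 0) (hk1 : k ≠ 1) :
    Set.image2 (fun a b => (1 - k) • a + k • b)
        (x +ᵥ (U₁ : Set V)) (y +ᵥ (U₂ : Set V))
      = ((1 - k) • x + k • y) +ᵥ ((U₁ ⊔ U₂ : Submodule K V) : Set V) :=
  weighted_mean_of_cosets_general (sub_ne_zero.mpr hk1.symm).isUnit hk0.isUnit x y U₁ U₂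
end

section
/- Let K be a field, V a vector space over K, s₁ and s₂ nonempty affine subspaces of V, and k ∈ K with k ≠ 0 and k ≠ 1. Then the set T = {(1-k)•a + k•b : a ∈ s₁, b ∈ s₂} is the carrier of an affine subspace of V whose direction is s₁.direction ⊔ s₂.direction. -/
/-! Fix `p ∈ s₁` and `q ∈ s₂`. A unit `a` maps a submodule onto itself, so it carries the affine
subspace through `p` to the one through `a • p` with the same direction; the sum of the affine
subspaces through `a • p` and `b • q` is the one through `a • p + b • q` whose direction is the sum
of the directions. -/

open scoped Pointwise

theorem smul_coe_submodule_of_isUnit {R M : Type*} [Semiring R] [AddCommMonoid M] [Module R M]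
    {a : R} (ha : IsUnit a) (D : Submodule R M) : a • (D : Set M) = D := by
  obtain ⟨u, rfl⟩ := ha
  change u • (D : Set M) = D
  ext v
  rw [Set.mem_smul_set_iff_inv_smul_mem, Units.smul_def, SetLike.mem_coe,
    D.smul_mem_iff_of_isUnit u⁻¹.isUnit, SetLike.mem_coe]

section

variable {R V : Type*} [Ring R] [AddCommGroup V] [Module R V]

theorem coe_affineSubspace_mk'_eq_vadd (p : V) (D : Submodule R V) :
    (AffineSubspace.mk' p D : Set V) = p +ᵥ (D : Set V) := by
  ext x
  rw [SetLike.mem_coe, AffineSubspace.mem_mk', Set.mem_vadd_set_iff_neg_vadd_mem, vsub_eq_sub,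
    vadd_eq_add, neg_add_eq_sub, SetLike.mem_coe]

theorem smul_coe_affineSubspace_mk'_of_isUnit {a : R} (ha : IsUnit a) (p : V)
    (D : Submodule R V) :
    a • (AffineSubspace.mk' p D : Set V) = AffineSubspace.mk' (a • p) D := by
  simp only [coe_affineSubspace_mk'_eq_vadd, ← Set.singleton_vadd, vadd_eq_add, smul_add,
    Set.smul_set_singleton, smul_coe_submodule_of_isUnit ha]

theorem coe_affineSubspace_mk'_add_coe_mk' (p q : V) (D E : Submodule R V) :
    (AffineSubspace.mk' p D : Set V) + (AffineSubspace.mk' q E : Set V) =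
      AffineSubspace.mk' (p + q) (D ⊔ E) := by
  simp only [coe_affineSubspace_mk'_eq_vadd, Submodule.coe_sup, ← Set.singleton_vadd, vadd_eq_add,
    ← Set.singleton_add_singleton]
  exact add_add_add_comm _ _ _ _

theorem weighted_mean_of_affineSubspaces_general {s₁ s₂ : AffineSubspace R V}
    (h₁ : (s₁ : Set V).Nonempty) (h₂ : (s₂ : Set V).Nonempty) {a b : R}
    (ha : IsUnit a) (hb : IsUnit b) :
    ∃ A : AffineSubspace R V,
      (A : Set V) = Set.image2 (fun x y => a • x + b • y) (s₁ : Set V) (s₂ : Set V) ∧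
        A.direction = s₁.direction ⊔ s₂.direction := by
  obtain ⟨p, hp⟩ := h₁
  obtain ⟨q, hq⟩ := h₂
  refine ⟨AffineSubspace.mk' (a • p + b • q) (s₁.direction ⊔ s₂.direction), ?_,
    AffineSubspace.direction_mk' _ _⟩
  calc (AffineSubspace.mk' (a • p + b • q) (s₁.direction ⊔ s₂.direction) : Set V)
      = a • (AffineSubspace.mk' p s₁.direction : Set V) +
          b • (AffineSubspace.mk' q s₂.direction : Set V) := by
        rw [smul_coe_affineSubspace_mk'_of_isUnit ha, smul_coe_affineSubspace_mk'_of_isUnit hb,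
          coe_affineSubspace_mk'_add_coe_mk']
    _ = a • (s₁ : Set V) + b • (s₂ : Set V) := by
        rw [AffineSubspace.mk'_eq hp, AffineSubspace.mk'_eq hq]
    _ = Set.image2 (fun x y => a • x + b • y) (s₁ : Set V) (s₂ : Set V) :=
        (Set.image2_image_left ..).trans (Set.image2_image_right ..)

end

/-- Applying the weighted mean operation `k̲(a,b) = (1-k)•a + k•b`, for
`k ≠ 0, 1`, elementwise to two nonempty affine subspaces `s₁, s₂` of a vector
space yields (the carrier of) an affine subspace whose direction is
`s₁.direction ⊔ s₂.direction`. -/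
theorem weighted_mean_of_affineSubspaces
    (K : Type*) [Field K] (V : Type*) [AddCommGroup V] [Module K V]
    (s₁ s₂ : AffineSubspace K V)
    (h₁ : (s₁ : Set V).Nonempty) (h₂ : (s₂ : Set V).Nonempty)
    (k : K) (hk0 : k ≠ 0) (hk1 : k ≠ 1) :
    ∃ A : AffineSubspace K V,
      (A : Set V)
          = Set.image2 (fun a b => (1 - k) • a + k • b) (s₁ : Set V) (s₂ : Set V) ∧
        A.direction = s₁.direction ⊔ s₂.direction := by
  exact weighted_mean_of_affineSubspaces_general h₁ h₂ (sub_ne_zero.mpr hk1.symm).isUnit hk0.isUnit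
end

section
/- Let V be a vector space over ℚ, let S be a join semilattice, and let h : V → S be a map such that for every rational p with 0 < p < 1 and all x, y ∈ V, h((1-p)•x + p•y) = h(x) ⊔ h(y). Then h is constant: h(x) = h(y) for all x, y ∈ V. -/
open AffineMap Function

theorem map_eq_of_le_map_of_surjective {A S : Type*} [PartialOrder S] {f : A → A → A} {h : A → S}
    (hf : ∀ x, Surjective (f x)) (hle : ∀ x y, h x ≤ h (f x y)) (x y : A) : h x = h y := by
  have map_le (a b : A) : h a ≤ h b := by
    obtain ⟨c, rfl⟩ := hf a b
    exact hle a c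
  exact (map_le x y).antisymm (map_le y x)

section AffineSpace

variable {k V P : Type*} [Ring k] [AddCommGroup V] [Module k V] [AddTorsor V P] {p : k}

theorem lineMap_surjective_of_isUnit (hp : IsUnit p) (x : P) :
    Surjective fun y : P ↦ lineMap x y p := by
  obtain ⟨q, hpq⟩ := hp.exists_right_inv
  intro z
  exact ⟨lineMap x z q, by simp only [lineMap_lineMap_right, hpq, lineMap_apply_one]⟩

theorem semilattice_quotient_of_rational_space_trivial_general {S : Type*} [SemilatticeSup S]
    {h : P → S} (hp : IsUnit p) (hhom : ∀ x y : P, h (lineMap x y p) = h x ⊔ h y) (x y : P) :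
    h x = h y :=
  map_eq_of_le_map_of_surjective (lineMap_surjective_of_isUnit hp)
    (fun a b ↦ le_sup_left.trans_eq (hhom a b).symm) x y

end AffineSpace

/-- A map from a rational vector space to a join semilattice turning every
weighted mean with weight in the open rational unit interval into a join is
constant: the barycentric reduct of an affine space over `ℚ` has no nontrivial
semilattice quotients. -/
theorem semilattice_quotient_of_rational_space_trivial
    (V : Type*) [AddCommGroup V] [Module ℚ V]
    (S : Type*) [SemilatticeSup S] (h : V → S)
    (hhom : ∀ p : ℚ, 0 < p → p < 1 →
        ∀ x y : V, h ((1 - p) • x + p • y) = h x ⊔ h y) :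
    ∀ x y : V, h x = h y :=
  semilattice_quotient_of_rational_space_trivial_general (p := (1 / 2 : ℚ)) (by norm_num)
    (by simpa only [lineMap_apply_module] using hhom (1 / 2) (by norm_num) (by norm_num))
end

section
/- Let V be a vector space over ℝ, let A ⊆ V be a finite set, and let C = convexHull ℝ A. If F ⊆ C is convex and is an extreme subset of C (IsExtreme ℝ C F), then F = convexHull ℝ (A ∩ F). -/
/-!
Let `C = convexHull 𝕜 A` and `K = convexHull 𝕜 (A ∩ F)`. The set `C \ F ∪ K` is convex: if a point
of an open segment between two of its points lies in `F`, then by extremality so do both endpoints,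
which are therefore in `K`. As it contains `A`, it contains `C`, so `F ⊆ K`.
-/

section

variable {𝕜 V : Type*} [Semiring 𝕜] [PartialOrder 𝕜] [ZeroLEOneClass 𝕜]
  [AddCommMonoid V] [Module 𝕜 V] {A C F K : Set V}

theorem convex_sdiff_union_of_isExtreme (hC : Convex 𝕜 C) (hCF : IsExtreme 𝕜 C F)
    (hK : Convex 𝕜 K) (hKC : K ⊆ C) : Convex 𝕜 (C \ F ∪ K) := by
  have hsub : C \ F ∪ K ⊆ C := Set.union_subset Set.sdiff_subset hKC
  have mem_K_of_mem_F {x : V} (hx : x ∈ C \ F ∪ K) (hxF : x ∈ F) : x ∈ K :=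
    hx.resolve_left fun hxCF => hxCF.2 hxF
  refine convex_iff_openSegment_subset.2 fun x hx y hy z hz => ?_
  by_cases hzF : z ∈ F
  · have hxF : x ∈ F := hCF.left_mem_of_mem_openSegment (hsub hx) (hsub hy) hzF hz
    have hyF : y ∈ F := hCF.right_mem_of_mem_openSegment (hsub hx) (hsub hy) hzF hz
    exact Or.inr (hK.openSegment_subset (mem_K_of_mem_F hx hxF) (mem_K_of_mem_F hy hyF) hz)
  · exact Or.inl ⟨hC.openSegment_subset (hsub hx) (hsub hy) hz, hzF⟩

theorem subset_convexHull_inter_of_isExtreme (hF : IsExtreme 𝕜 (convexHull 𝕜 A) F) :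
    F ⊆ convexHull 𝕜 (A ∩ F) := by
  have hconvex : Convex 𝕜 (convexHull 𝕜 A \ F ∪ convexHull 𝕜 (A ∩ F)) :=
    convex_sdiff_union_of_isExtreme (convex_convexHull 𝕜 A) hF (convex_convexHull 𝕜 (A ∩ F))
      (convexHull_mono Set.inter_subset_left)
  have hA : A ⊆ convexHull 𝕜 A \ F ∪ convexHull 𝕜 (A ∩ F) := fun a ha => by
    by_cases haF : a ∈ F
    · exact Or.inr (subset_convexHull 𝕜 _ ⟨ha, haF⟩)
    · exact Or.inl ⟨subset_convexHull 𝕜 A ha, haF⟩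
  exact fun x hx => (convexHull_min hA hconvex (hF.subset hx)).resolve_left fun h => h.2 hx

theorem extreme_subset_of_polytope_eq_hull_of_vertices_general (hF : Convex 𝕜 F)
    (hext : IsExtreme 𝕜 (convexHull 𝕜 A) F) : F = convexHull 𝕜 (A ∩ F) :=
  (subset_convexHull_inter_of_isExtreme hext).antisymm (convexHull_min Set.inter_subset_right hF)

end

/-- Every convex extreme subset `F` of a convex polytope `C = convexHull ℝ A`
(`A` finite) is the convex hull of the vertices of the polytope it contains:
`F = convexHull ℝ (A ∩ F)`. -/
theorem extreme_subset_of_polytope_eq_hull_of_vertices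
    (V : Type*) [AddCommGroup V] [Module ℝ V]
    (A : Set V) (hA : A.Finite) (F : Set V)
    (hF : Convex ℝ F) (hext : IsExtreme ℝ (convexHull ℝ A) F) :
    F = convexHull ℝ (A ∩ F) :=
  extreme_subset_of_polytope_eq_hull_of_vertices_general hF hext
end
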